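/- Let (X,d,I) be a coarse interval space with parameters (φ,ψ), and set h(R₁,R₂) = ψ(R₂) + ψ(φ(R₁ + φ(R₂))). If the Hausdorff distance between [a,b] and [a,c] is at most R, then d(b,c) ≤ h(R,R). -/

import Mathlib

/-- The interval `[a,b]` associated to a ternary operator `μ`. -/
def cmInterval {X : Type*} (μ : X → X → X → X) (a b : X) : Set X :=
  {c | ∃ x, c = μ a x b}

/-- The closed `R`-neighbourhood of a set `A`. -/
def cmNbhd {X : Type*} [MetricSpace X] (R : ℝ) (A : Set X) : Set X :=
  {x | ∃ a ∈ A, dist x a ≤ R}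

/-- A coarse interval space with parameters `(φ, ψ)`. -/
structure IsCoarseIntervalSpace {X : Type*} [MetricSpace X]
    (I : X → X → Set X) (φ ψ : ℝ → ℝ) : Prop where
  I1a : ∀ a : X, I a a = {a}
  I1b : ∀ a b : X, I a b = I b a
  φ_mono : Monotone φ
  I2 : ∀ (R : ℝ) (a b c : X), c ∈ cmNbhd R (I a b) →
    I a c ⊆ cmNbhd (φ R) (I a b)
  ψ_mono : Monotone ψ
  I3ne : ∀ a b c : X, (I a b ∩ I b c ∩ I c a).Nonempty
  I3diam : ∀ (R : ℝ) (a b c x y : X),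
    x ∈ cmNbhd R (I a b) ∩ cmNbhd R (I b c) ∩ cmNbhd R (I c a) →
    y ∈ cmNbhd R (I a b) ∩ cmNbhd R (I b c) ∩ cmNbhd R (I c a) →
    dist x y ≤ ψ R

/-- An induced (ternary) operator of an interval map `I` : for all `a b c`,
`μ a b c` lies in `[a,b] ∩ [b,c] ∩ [c,a]` and is invariant under permutations. -/
def IsInducedOperator {X : Type*} (I : X → X → Set X) (μ : X → X → X → X) : Prop :=
  (∀ a b c : X, μ a b c ∈ I a b ∩ I b c ∩ I c a) ∧
  (∀ a b c : X, μ a b c = μ a c b) ∧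
  (∀ a b c : X, μ a b c = μ b a c)

/-!
Intervals contain their endpoints, so if `b ∈ N_R([a,c])` and `c ∈ N_R([a,b])`, then `b` and `c`
both lie in the `R`-neighbourhoods of all three of `[a,b]`, `[b,c]` and `[c,a]`. The diameter bound
of (I3) therefore already gives `d(b,c) ≤ ψ(R)`, and the second summand of `h(R,R)` is nonnegative.
-/

section Nbhd

variable {X : Type*} [MetricSpace X] {R : ℝ} {A : Set X} {x : X}

theorem subset_cmNbhd (hR : 0 ≤ R) : A ⊆ cmNbhd R A :=
  fun x hx ↦ ⟨x, hx, (dist_self x).trans_le hR⟩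

theorem nonneg_of_mem_cmNbhd (hx : x ∈ cmNbhd R A) : 0 ≤ R :=
  let ⟨_, _, hdist⟩ := hx
  dist_nonneg.trans hdist

end Nbhd

namespace IsCoarseIntervalSpace

variable {X : Type*} [MetricSpace X] {I : X → X → Set X} {φ ψ : ℝ → ℝ} {R : ℝ}

theorem right_mem (hI : IsCoarseIntervalSpace I φ ψ) (a b : X) : b ∈ I a b := by
  obtain ⟨z, ⟨hz_ab, hz_bb⟩, -⟩ := hI.I3ne a b b
  have hzb : z = b := by rwa [hI.I1a] at hz_bb
  exact hzb ▸ hz_ab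

theorem left_mem (hI : IsCoarseIntervalSpace I φ ψ) (a b : X) : a ∈ I a b :=
  hI.I1b b a ▸ hI.right_mem b a

theorem φ_nonneg [Nonempty X] (hI : IsCoarseIntervalSpace I φ ψ) (hR : 0 ≤ R) : 0 ≤ φ R := by
  obtain ⟨a⟩ := ‹Nonempty X›
  have ha : a ∈ I a a := hI.left_mem a a
  exact nonneg_of_mem_cmNbhd (hI.I2 R a a a (subset_cmNbhd hR ha) ha)

theorem ψ_nonneg [Nonempty X] (hI : IsCoarseIntervalSpace I φ ψ) (hR : 0 ≤ R) : 0 ≤ ψ R := by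
  obtain ⟨a⟩ := ‹Nonempty X›
  have ha : a ∈ cmNbhd R (I a a) := subset_cmNbhd hR (hI.left_mem a a)
  exact dist_nonneg.trans (hI.I3diam R a a a a a ⟨⟨ha, ha⟩, ha⟩ ⟨⟨ha, ha⟩, ha⟩)

theorem ψ_le_ψ_add_ψ_φ [Nonempty X] (hI : IsCoarseIntervalSpace I φ ψ) {R₁ R₂ : ℝ}
    (hR₁ : 0 ≤ R₁) (hR₂ : 0 ≤ R₂) : ψ R₂ ≤ ψ R₂ + ψ (φ (R₁ + φ R₂)) :=
  le_add_of_nonneg_right (hI.ψ_nonneg (hI.φ_nonneg (add_nonneg hR₁ (hI.φ_nonneg hR₂))))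

end IsCoarseIntervalSpace

theorem stmt3_general {X : Type*} [MetricSpace X] {I : X → X → Set X} {φ ψ : ℝ → ℝ}
    (hI : IsCoarseIntervalSpace I φ ψ) {R : ℝ} {a b c : X}
    (hb : b ∈ cmNbhd R (I a c)) (hc : c ∈ cmNbhd R (I a b)) : dist b c ≤ ψ R := by
  have hR : 0 ≤ R := nonneg_of_mem_cmNbhd hb
  apply hI.I3diam R a b c b c
  · exact ⟨⟨subset_cmNbhd hR (hI.right_mem a b), subset_cmNbhd hR (hI.left_mem b c)⟩,
      hI.I1b a c ▸ hb⟩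
  · exact ⟨⟨hc, subset_cmNbhd hR (hI.right_mem b c)⟩, subset_cmNbhd hR (hI.left_mem c a)⟩

/-- in a coarse interval space with parameters `(φ, ψ)`, with
`h R₁ R₂ = ψ R₂ + ψ (φ (R₁ + φ R₂))`: if the Hausdorff distance between
`[a,b]` and `[a,c]` is at most `R` (i.e. each is contained in the closed
`R`-neighbourhood of the other), then `d(b,c) ≤ h(R,R)`. -/
theorem stmt3 {X : Type*} [MetricSpace X] (I : X → X → Set X) (φ ψ : ℝ → ℝ)
    (hI : IsCoarseIntervalSpace I φ ψ) :
    ∀ (R : ℝ) (a b c : X),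
      I a b ⊆ cmNbhd R (I a c) → I a c ⊆ cmNbhd R (I a b) →
      dist b c ≤ ψ R + ψ (φ (R + φ R)) := by
  intro R a b c hbc hcb
  have : Nonempty X := ⟨a⟩
  have hb : b ∈ cmNbhd R (I a c) := hbc (hI.right_mem a b)
  have hR : 0 ≤ R := nonneg_of_mem_cmNbhd hb
  exact (stmt3_general hI hb (hcb (hI.right_mem a c))).trans (hI.ψ_le_ψ_add_ψ_φ hR hR)
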